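/- For every 1 ≤ ℓ ≤ q−1, det(I + P + Q_ℓ) = 1 − μ·2q/(q−1) − μ²·4q(q−2)/(q−1)². -/

import Mathlib

open MeasureTheory ProbabilityTheory Real Finset Matrix

noncomputable section

/-- `α_i ∈ ℝ^q` (1-based `i` and 1-based coordinate index as in the paper). -/
def alphaVec (q i : ℕ) : Fin q → ℝ :=
  fun k => (Real.sqrt ((i : ℝ) * ((i : ℝ) + 1)))⁻¹ *
    (if (k : ℕ) + 1 < i + 1 then 1
     else if (k : ℕ) + 1 = i + 1 then -(i : ℝ)
     else 0)

/-- `ω_{m,ℓ} = α_{m,ℓ}` for `1 ≤ m ≤ q−2` and `ω_{m,ℓ} = 0` for `m ∈ {q−1, q}`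
(the index `m : Fin q` encodes the paper's 1-based index `m+1`). -/
def omegaVec (q : ℕ) (l : Fin q) : Fin q → ℝ :=
  fun m => if (m : ℕ) < q - 2 then alphaVec q ((m : ℕ) + 1) l else 0

/-- The matrix `Q_ℓ` with entries
`Q_{ℓ,mm'} = μ ω_{m,ℓ} ω_{m',ℓ} + √μ √(1+μq/(q−1)) (ω_{m,ℓ} δ_{m',q−1} + ω_{m',ℓ} δ_{m,q−1})`. -/
def Qmat (q : ℕ) (μ : ℝ) (l : Fin q) : Matrix (Fin q) (Fin q) ℝ :=
  Matrix.of fun m m' =>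
    μ * omegaVec q l m * omegaVec q l m'
    + Real.sqrt μ * Real.sqrt (1 + μ * (q : ℝ) / ((q : ℝ) - 1)) *
      (omegaVec q l m * (if (m' : ℕ) + 1 = q - 1 then 1 else 0)
        + omegaVec q l m' * (if (m : ℕ) + 1 = q - 1 then 1 else 0))

/-- The matrix `P` with entries `P_{mm'} = (1+μq/(q−1))⁻¹` times:
`μq/(q−1)` if `m=m'=q`; `−μq/(q−1)(2+μq/(q−1))` if `m=m'=q−1`;
`√μ √(q/(q−1))` if `{m,m'} = {q−1,q}`; `0` otherwise. -/
def Pmat (q : ℕ) (μ : ℝ) : Matrix (Fin q) (Fin q) ℝ :=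
  Matrix.of fun m m' =>
    (1 + μ * (q : ℝ) / ((q : ℝ) - 1))⁻¹ *
      (if (m : ℕ) + 1 = q ∧ (m' : ℕ) + 1 = q then μ * (q : ℝ) / ((q : ℝ) - 1)
       else if (m : ℕ) + 1 = q - 1 ∧ (m' : ℕ) + 1 = q - 1 then
         -(μ * (q : ℝ) / ((q : ℝ) - 1)) * (2 + μ * (q : ℝ) / ((q : ℝ) - 1))
       else if ((m : ℕ) + 1 = q ∧ (m' : ℕ) + 1 = q - 1) ∨
               ((m : ℕ) + 1 = q - 1 ∧ (m' : ℕ) + 1 = q) then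
         Real.sqrt μ * Real.sqrt ((q : ℝ) / ((q : ℝ) - 1))
       else 0)

/-!
`P + Q_ℓ` is a quadratic form in the three mutually orthogonal vectors `ω_ℓ`, `e_{q-1}`, `e_q`, so
the Weinstein–Aronszajn identity `det (1 + A B) = det (1 + B A)` reduces the determinant to a
`3 × 3` one, which depends on `ℓ` only through `‖ω_ℓ‖²`. The squared entries of the `α_i` telescope
in `i`, giving `‖ω_ℓ‖² = (q-2)/(q-1)` for every `ℓ ≤ q-1`.
-/

section Determinant

variable {ι : Type*} [Fintype ι] [DecidableEq ι]

theorem det_one_add_vecMulVec_of_orthogonal {R : Type*} [CommRing R] {u e f : ι → R}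
    (hue : u ⬝ᵥ e = 0) (huf : u ⬝ᵥ f = 0) (hef : e ⬝ᵥ f = 0)
    (hee : e ⬝ᵥ e = 1) (hff : f ⬝ᵥ f = 1) (p r s t c : R) :
    (1 + (p • vecMulVec e e + r • (vecMulVec e f + vecMulVec f e) + s • vecMulVec f f)
        + (t • vecMulVec u u + c • (vecMulVec u e + vecMulVec e u))).det
      = (1 + t * (u ⬝ᵥ u)) * ((1 + p) * (1 + s) - r ^ 2) - c ^ 2 * (u ⬝ᵥ u) * (1 + s) := by
  let V : Matrix (Fin 3) ι R := of ![u, e, f]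
  let S : Matrix (Fin 3) (Fin 3) R := !![t, c, 0; c, p, r; 0, r, s]
  have factorization :
      1 + (p • vecMulVec e e + r • (vecMulVec e f + vecMulVec f e) + s • vecMulVec f f)
        + (t • vecMulVec u u + c • (vecMulVec u e + vecMulVec e u)) = 1 + Vᵀ * (S * V) := by
    ext i j
    simp only [V, S, Matrix.add_apply, Matrix.smul_apply, mul_apply, transpose_apply, of_apply,
      vecMulVec_apply, smul_eq_mul, Fin.sum_univ_three, Matrix.cons_val]
    ring
  have gram : V * Vᵀ = diagonal ![u ⬝ᵥ u, 1, 1] := by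
    have entry (i j : Fin 3) : (V * Vᵀ) i j = ![u, e, f] i ⬝ᵥ ![u, e, f] j := rfl
    ext i j
    rw [entry]
    fin_cases i <;> fin_cases j <;>
      simp [hue, huf, hef, hee, hff, dotProduct_comm e u, dotProduct_comm f u, dotProduct_comm f e]
  have reduced :
      1 + S * (V * Vᵀ)
        = !![1 + t * (u ⬝ᵥ u), c, 0; c * (u ⬝ᵥ u), 1 + p, r; 0, r, 1 + s] := by
    rw [gram]
    ext i j
    rw [Matrix.add_apply, mul_diagonal]
    fin_cases i <;> fin_cases j <;> simp [S]
  rw [factorization, det_one_add_mul_comm, Matrix.mul_assoc, reduced, det_fin_three]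
  simp only [of_apply, Matrix.cons_val]
  ring

theorem det_one_add_vecMulVec_of_orthogonal_of_sq_eq {K : Type*} [Field K] {u e f : ι → K}
    (hue : u ⬝ᵥ e = 0) (huf : u ⬝ᵥ f = 0) (hef : e ⬝ᵥ f = 0)
    (hee : e ⬝ᵥ e = 1) (hff : f ⬝ᵥ f = 1) {a b c t : K}
    (ha : 1 + a ≠ 0) (hb : b ^ 2 = a) (hc : c ^ 2 = t * (1 + a)) :
    (1 + (((1 + a)⁻¹ * (-a * (2 + a))) • vecMulVec e e
          + ((1 + a)⁻¹ * b) • (vecMulVec e f + vecMulVec f e) + ((1 + a)⁻¹ * a) • vecMulVec f f)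
        + (t • vecMulVec u u + c • (vecMulVec u e + vecMulVec e u))).det
      = 1 - 2 * a - 4 * a * t * (u ⬝ᵥ u) := by
  rw [det_one_add_vecMulVec_of_orthogonal hue huf hef hee hff, hc]
  have orthonormal_minor :
      (1 + (1 + a)⁻¹ * (-a * (2 + a))) * (1 + (1 + a)⁻¹ * a) - ((1 + a)⁻¹ * b) ^ 2 = 1 - 2 * a := by
    rw [mul_pow, hb]
    field_simp
    ring
  rw [orthonormal_minor]
  field_simp
  ring

end Determinant

section Omega

theorem alphaVec_succ_sq (q i : ℕ) (k : Fin q) :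
    alphaVec q (i + 1) k ^ 2
      = (if (k : ℕ) ≤ i + 1 then ((i + 1 : ℕ) : ℝ) / ((i + 1 : ℕ) + 1) else 0)
        - (if (k : ℕ) ≤ i then (i : ℝ) / (i + 1) else 0) := by
  have sq_norm_nonneg : (0 : ℝ) ≤ (i + 1 : ℕ) * ((i + 1 : ℕ) + 1) := by positivity
  rw [alphaVec, mul_pow, inv_pow, Real.sq_sqrt sq_norm_nonneg]
  rcases lt_trichotomy (k : ℕ) (i + 1) with hk | hk | hk
  · rw [if_pos (by lia), if_pos (by lia), if_pos (by lia)]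
    push_cast
    field_simp
    ring
  · rw [if_neg (by lia), if_pos (by lia), if_pos (by lia), if_neg (by lia)]
    push_cast
    field_simp
    ring
  · rw [if_neg (by lia), if_neg (by lia), if_neg (by lia), if_neg (by lia)]
    ring

theorem sum_range_alphaVec_succ_sq {q n : ℕ} {k : Fin q} (hk : (k : ℕ) ≤ n) :
    ∑ i ∈ range n, alphaVec q (i + 1) k ^ 2 = (n : ℝ) / (n + 1) := by
  simp_rw [alphaVec_succ_sq]
  rw [sum_range_sub fun i : ℕ => if (k : ℕ) ≤ i then (i : ℝ) / (i + 1) else 0]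
  simp [hk]

theorem omegaVec_dotProduct_single {q : ℕ} (l : Fin q) {m : Fin q} (hm : q - 2 ≤ (m : ℕ)) :
    omegaVec q l ⬝ᵥ Pi.single m 1 = 0 := by
  simp [omegaVec, hm.not_gt]

theorem omegaVec_dotProduct_self {q : ℕ} (hq : 2 ≤ q) {l : Fin q} (hl : (l : ℕ) < q - 1) :
    omegaVec q l ⬝ᵥ omegaVec q l = ((q : ℝ) - 2) / (q - 1) := by
  obtain ⟨n, rfl⟩ := Nat.exists_eq_add_of_le' hq
  calc omegaVec (n + 2) l ⬝ᵥ omegaVec (n + 2) l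
      = ∑ i : Fin n, alphaVec (n + 2) (i + 1) l ^ 2 := by
        simp [dotProduct, Fin.sum_univ_castSucc, omegaVec, sq]
    _ = ∑ i ∈ range n, alphaVec (n + 2) (i + 1) l ^ 2 :=
        Fin.sum_univ_eq_sum_range (fun i => alphaVec (n + 2) (i + 1) l ^ 2) n
    _ = (n : ℝ) / (n + 1) := sum_range_alphaVec_succ_sq (by lia)
    _ = ((n + 2 : ℕ) - 2 : ℝ) / ((n + 2 : ℕ) - 1) := by
        push_cast
        ring_nf

end Omega

section Decomposition

variable {q : ℕ} (μ : ℝ)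

theorem Qmat_eq_vecMulVec (l : Fin q) {i : Fin q} (hi : (i : ℕ) + 1 = q - 1) :
    Qmat q μ l = μ • vecMulVec (omegaVec q l) (omegaVec q l)
      + (√μ * √(1 + μ * q / (q - 1))) • (vecMulVec (omegaVec q l) (Pi.single i 1)
        + vecMulVec (Pi.single i 1) (omegaVec q l)) := by
  have eq_i_iff (m : Fin q) : (m : ℕ) + 1 = q - 1 ↔ m = i := by rw [← hi, Fin.ext_iff]; lia
  ext m m'
  simp only [Qmat, of_apply, eq_i_iff, Matrix.add_apply, Matrix.smul_apply, vecMulVec_apply,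
    Pi.single_apply, smul_eq_mul]
  ring

theorem Pmat_eq_vecMulVec {i j : Fin q} (hi : (i : ℕ) + 1 = q - 1) (hj : (j : ℕ) + 1 = q) :
    Pmat q μ
      = ((1 + μ * q / (q - 1))⁻¹ * (-(μ * q / (q - 1)) * (2 + μ * q / (q - 1))))
          • vecMulVec (Pi.single i 1) (Pi.single i 1)
        + ((1 + μ * q / (q - 1))⁻¹ * (√μ * √(q / (q - 1))))
          • (vecMulVec (Pi.single i 1) (Pi.single j 1) + vecMulVec (Pi.single j 1) (Pi.single i 1))
        + ((1 + μ * q / (q - 1))⁻¹ * (μ * q / (q - 1)))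
          • vecMulVec (Pi.single j 1) (Pi.single j 1) := by
  have eq_i_iff (m : Fin q) : (m : ℕ) + 1 = q - 1 ↔ m = i := by rw [← hi, Fin.ext_iff]; lia
  have eq_j_iff (m : Fin q) : (m : ℕ) + 1 = q ↔ m = j := by rw [Fin.ext_iff]; lia
  have hij : i ≠ j := by rw [Ne, Fin.ext_iff]; lia
  ext m m'
  simp only [Pmat, of_apply, eq_i_iff, eq_j_iff, Matrix.add_apply, Matrix.smul_apply,
    vecMulVec_apply, Pi.single_apply, smul_eq_mul]
  split_ifs <;> simp_all

end Decomposition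

/-- third determinant in the Proposition of the paper.
For every `1 ≤ ℓ ≤ q−1`,
`det(I + P + Q_ℓ) = 1 − 2μq/(q−1) − 4μ²q(q−2)/(q−1)²`. -/
theorem det_I_add_P_add_Q
    (q : ℕ) (hq : 2 ≤ q) (μ : ℝ) (hμ : 0 < μ)
    (l : Fin q) (hl : (l : ℕ) < q - 1) :
    (1 + Pmat q μ + Qmat q μ l).det
      = 1 - μ * (2 * (q : ℝ)) / ((q : ℝ) - 1)
        - μ ^ 2 * (4 * (q : ℝ) * ((q : ℝ) - 2)) / ((q : ℝ) - 1) ^ 2 := by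
  have hq_sub_one : (0 : ℝ) < q - 1 := by
    have : (2 : ℝ) ≤ q := mod_cast hq
    linarith
  let i : Fin q := ⟨q - 2, by lia⟩
  let j : Fin q := ⟨q - 1, by lia⟩
  have hi : (i : ℕ) + 1 = q - 1 := by simp only [i]; lia
  have hj : (j : ℕ) + 1 = q := by simp only [j]; lia
  have hij : i ≠ j := by rw [Ne, Fin.ext_iff]; lia
  have hb : (√μ * √(q / (q - 1))) ^ 2 = μ * q / (q - 1) := by
    rw [mul_pow, Real.sq_sqrt hμ.le, Real.sq_sqrt (by positivity), mul_div_assoc]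
  have hc : (√μ * √(1 + μ * q / (q - 1))) ^ 2 = μ * (1 + μ * q / (q - 1)) := by
    rw [mul_pow, Real.sq_sqrt hμ.le, Real.sq_sqrt (by positivity)]
  rw [Pmat_eq_vecMulVec μ hi hj, Qmat_eq_vecMulVec μ l hi,
    det_one_add_vecMulVec_of_orthogonal_of_sq_eq (omegaVec_dotProduct_single l (by lia))
      (omegaVec_dotProduct_single l (by lia)) (by simp [hij]) (by simp) (by simp)
      (by positivity) hb hc,
    omegaVec_dotProduct_self hq hl]
  field_simp

end
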